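/- Let Ω be a finite nonempty set and ≤ a binary relation on the powerset of Ω, and define A < B to mean A ≤ B and not B ≤ A. Then ≤ is strongly representable — i.e., there exists a probability measure μ on Ω such that A ≤ B implies μ(A) ≤ μ(B) and A < B implies μ(A) < μ(B) for all A, B ⊆ Ω — if and only if either: ≤ is symmetric and satisfies (AR): for every n ≥ 1 and sequences (A_i)_{i≤n}, (B_i)_{i≤n} such that every ω ∈ Ω belongs to strictly more B_i's than A_i's, if B_i ≤ A_i for all i < n then not B_n ≤ A_n; or ≤ is not symmetric and satisfies (S+): for all sequences (A_i)_{i≤n} ≤₀ (B_i)_{i≤n}, if B_i ≤ A_i for all i < n then not B_n < A_n. -/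

import Mathlib

open Finset

variable {Ω : Type*}

/-- The measure of a finite set of states given weights `w`: `μ(A) = ∑_{ω ∈ A} w ω`. -/
noncomputable def mea (w : Ω → ℝ) (A : Finset Ω) : ℝ := ∑ ω ∈ A, w ω

/-- `w` is a probability weight function: nonnegative and summing to 1. -/
def IsProbWeight [Fintype Ω] (w : Ω → ℝ) : Prop :=
  (∀ ω, 0 ≤ w ω) ∧ (∑ ω, w ω) = 1

/-- The measure is regular: only the empty set has measure 0. -/
def RegularW (w : Ω → ℝ) : Prop := ∀ X : Finset Ω, mea w X = 0 → X = ∅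

/-- Conditional measure `μ_A(X) = μ(A ∩ X) / μ(A)`. -/
noncomputable def condMea [DecidableEq Ω] (w : Ω → ℝ) (A X : Finset Ω) : ℝ := mea w (A ∩ X) / mea w A

/-- `X` is `(m,t)`-stable for a set function `m`: `X` is nonempty and for every `E` with
`X ∩ E ≠ ∅` and `m E > 0`, `m (X ∩ E) / m E > t`. -/
def StableFor [DecidableEq Ω] (m : Finset Ω → ℝ) (t : ℝ) (X : Finset Ω) : Prop :=
  X.Nonempty ∧ ∀ E : Finset Ω, (X ∩ E).Nonempty → 0 < m E → t < m (X ∩ E) / m E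

/-- `S` is the `⊆`-least `(m,t)`-stable set. -/
def IsLeastStable [DecidableEq Ω] (m : Finset Ω → ℝ) (t : ℝ) (S : Finset Ω) : Prop :=
  StableFor m t S ∧ ∀ X : Finset Ω, StableFor m t X → S ⊆ X

/-- `w` represents the selection function `σ` for threshold `t`. -/
def RepresentsAt [DecidableEq Ω] (w : Ω → ℝ) (t : ℝ) (σ : Finset Ω → Finset Ω) : Prop :=
  ∀ E : Finset Ω, (0 < mea w E → IsLeastStable (condMea w E) t (σ E)) ∧
    (mea w E = 0 → σ E = ∅)

/-- Selection axiom (S1): `σ(X) = ∅` only if `X = ∅`. -/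
def SelA1 (σ : Finset Ω → Finset Ω) : Prop := ∀ X : Finset Ω, σ X = ∅ → X = ∅

/-- Selection axiom (S2): `σ(X) ⊆ X`. -/
def SelA2 (σ : Finset Ω → Finset Ω) : Prop := ∀ X : Finset Ω, σ X ⊆ X

/-- Selection axiom (S3): if `σ(A) ∩ B ≠ ∅` then `σ(A ∩ B) ⊆ σ(A) ∩ B`. -/
def SelA3 [DecidableEq Ω] (σ : Finset Ω → Finset Ω) : Prop :=
  ∀ A B : Finset Ω, (σ A ∩ B).Nonempty → σ (A ∩ B) ⊆ σ A ∩ B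

/-- Selection axiom (S4ₙ) for every `n`: if `σ(A ∪ Xᵢ) = Xᵢ` for all `i`, then
`σ(A ∪ ⋃ᵢ Xᵢ) ⊆ ⋃ᵢ Xᵢ`. -/
def SelA4 [DecidableEq Ω] (σ : Finset Ω → Finset Ω) : Prop :=
  ∀ n : ℕ, ∀ A : Finset Ω, ∀ X : Fin (n + 1) → Finset Ω,
    (∀ i, σ (A ∪ X i) = X i) →
    σ (A ∪ univ.biUnion X) ⊆ univ.biUnion X

/-- `ω ≻_σ X` iff `ω ∉ X` and `σ (X ∪ {ω}) = {ω}`. -/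
def succS [DecidableEq Ω] (σ : Finset Ω → Finset Ω) (ω : Ω) (X : Finset Ω) : Prop :=
  ω ∉ X ∧ σ (X ∪ {ω}) = {ω}

/-- `X ⪰_σ ω` iff `ω ∈ X` or `σ (X ∪ {ω}) ≠ {ω}`. -/
def succeqS [DecidableEq Ω] (σ : Finset Ω → Finset Ω) (X : Finset Ω) (ω : Ω) : Prop :=
  ω ∈ X ∨ σ (X ∪ {ω}) ≠ {ω}

/-- `A ⪰*_σ B` iff either `A` is a singleton `{a}` with `a ≻_σ B`, or `B` is a singleton
`{b}` with `A ⪰_σ b`. -/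
def geStar [DecidableEq Ω] (σ : Finset Ω → Finset Ω) (A B : Finset Ω) : Prop :=
  (∃ a, A = {a} ∧ succS σ a B) ∨ (∃ b, B = {b} ∧ succeqS σ A b)

/-- Two sequences of sets are balanced: every state occurs in exactly as many `A i`'s
as `B i`'s. -/
def BalancedSeq {n : ℕ} (A B : Fin n → Finset Ω) : Prop :=
  ∀ ω : Ω, Nat.card {i // ω ∈ A i} = Nat.card {i // ω ∈ B i}

/-- `(A_i) ≤₀ (B_i)`: every state occurs in at most as many `A i`'s as `B i`'s. -/
def DomSeq {n : ℕ} (A B : Fin n → Finset Ω) : Prop :=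
  ∀ ω : Ω, Nat.card {i // ω ∈ A i} ≤ Nat.card {i // ω ∈ B i}

/-- The (Scott) axiom for the induced order `⪰*_σ`. -/
def ScottAx [DecidableEq Ω] (σ : Finset Ω → Finset Ω) : Prop :=
  ∀ n : ℕ, ∀ A B : Fin (n + 1) → Finset Ω, BalancedSeq A B →
    (∀ i, geStar σ (A i) (B i)) → ∀ i, geStar σ (B i) (A i)

open Finset in
theorem farkas_aux {V ι : Type*} [AddCommGroup V] [Module ℚ V] [DecidableEq ι] (s : Finset ι) :
    ∀ (a : ι → (V →ₗ[ℚ] ℚ)) (b : V →ₗ[ℚ] ℚ),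
      (∃ l : ι → ℚ, (∀ i, 0 ≤ l i) ∧ b = ∑ i ∈ s, l i • a i) ∨
      ∃ x, (∀ i ∈ s, 0 ≤ a i x) ∧ b x < 0 := by
  induction s using Finset.induction_on with
  | empty =>
    intro a b
    by_cases hb : b = 0
    · left; exact ⟨0, by simp, by simp [hb]⟩
    · right
      obtain ⟨x, hx⟩ : ∃ x, b x ≠ 0 := by
        by_contra! h
        exact hb (LinearMap.ext h)
      rcases lt_or_gt_of_ne hx with h | h
      · exact ⟨x, by simp, h⟩
      · exact ⟨-x, by simp, by simpa using h⟩
  | insert n s hn ih =>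
    intro a b
    by_contra! hcon
    obtain ⟨hc1, hc2⟩ := hcon
    rcases ih a b with ⟨l, hl, hb⟩ | ⟨x1, hx1, hbx1⟩
    · refine hc1 (fun i => if i = n then 0 else l i) (fun i => by split_ifs <;> simp [hl]) ?_
      rw [Finset.sum_insert hn, hb]
      simp only [if_true, zero_smul, zero_add]
      refine Finset.sum_congr rfl fun i hi => ?_
      rw [if_neg (ne_of_mem_of_not_mem hi hn)]
    · have hneg : a n x1 < 0 := by
        by_contra! h
        have := hc2 x1 (by
          intro i hi
          rcases Finset.mem_insert.1 hi with rfl | hi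
          · exact h
          · exact hx1 i hi)
        linarith
      obtain ⟨x0, hx0, hbx0, hn0⟩ : ∃ x0, (∀ i ∈ s, 0 ≤ a i x0) ∧ b x0 < 0 ∧ a n x0 = -1 := by
        have hp : 0 < (-(a n x1))⁻¹ := by
          apply inv_pos.2; linarith
        refine ⟨(-(a n x1))⁻¹ • x1, fun i hi => ?_, ?_, ?_⟩
        · simp only [map_smul, smul_eq_mul]
          exact mul_nonneg hp.le (hx1 i hi)
        · simp only [map_smul, smul_eq_mul]
          exact mul_neg_of_pos_of_neg hp hbx1
        · simp only [map_smul, smul_eq_mul]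
          rw [inv_neg, neg_mul, inv_mul_cancel₀ hneg.ne]
      rcases ih (fun i => a i + (a i x0) • a n) (b + (b x0) • a n) with
        ⟨l, hl, hb⟩ | ⟨y, hy, hby⟩
      · refine hc1 (fun i => if i = n then (∑ j ∈ s, l j * a j x0) - b x0 else l i)
          (fun i => ?_) ?_
        · split_ifs
          · have : 0 ≤ ∑ j ∈ s, l j * a j x0 :=
              Finset.sum_nonneg fun j hj => mul_nonneg (hl j) (hx0 j hj)
            linarith
          · exact hl i
        · rw [Finset.sum_insert hn, if_pos rfl]
          have h2 : ∑ i ∈ s, (if i = n then (∑ j ∈ s, l j * a j x0) - b x0 else l i) • a i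
              = ∑ i ∈ s, l i • a i := by
            refine Finset.sum_congr rfl fun i hi => ?_
            rw [if_neg (ne_of_mem_of_not_mem hi hn)]
          rw [h2]
          simp only [smul_add, Finset.sum_add_distrib, smul_smul, ← Finset.sum_smul] at hb
          rw [sub_smul]
          refine (eq_sub_of_add_eq hb).trans ?_
          abel
      · have := hc2 (y + (a n y) • x0) (by
          intro i hi
          rcases Finset.mem_insert.1 hi with rfl | hi
          · simp [hn0]
          · have := hy i hi
            simp at this ⊢
            linarith)
        simp at this hby
        linarith

/-- Signed indicator difference `1_B - 1_A` of a pair `(A, B)`. -/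
noncomputable def pdiff {Ω : Type*} (ω : Ω) (p : Finset Ω × Finset Ω) : ℤ :=
  open Classical in (if ω ∈ p.2 then 1 else 0) - (if ω ∈ p.1 then 1 else 0)

theorem sum_pdiff {Ω : Type*} [Fintype Ω] (w : Ω → ℚ) (p : Finset Ω × Finset Ω) :
    ∑ ω, (pdiff ω p : ℚ) * w ω = ∑ ω ∈ p.2, w ω - ∑ ω ∈ p.1, w ω := by
  classical
  simp [pdiff, sub_mul, Finset.sum_sub_distrib, ite_mul]

theorem key_aux {Ω : Type*} [Fintype Ω] (R : Finset Ω → Finset Ω → Prop) (c : Ω → ℤ)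
    (hno : ¬ ∃ w : Ω → ℚ, (∀ ω, 0 ≤ w ω) ∧
      (∀ A B, R A B → ∑ ω ∈ A, w ω ≤ ∑ ω ∈ B, w ω) ∧ 0 < ∑ ω, (c ω : ℚ) * w ω) :
    ∃ (D : ℕ) (S : Multiset (Finset Ω × Finset Ω)), 0 < D ∧ (∀ p ∈ S, R p.1 p.2) ∧
      ∀ ω, D * c ω + (S.map (pdiff ω)).sum ≤ 0 := by
  classical
  let fn : (Ω → ℤ) → ((Ω → ℚ) →ₗ[ℚ] ℚ) := fun d =>
    ∑ ω, (d ω : ℚ) • LinearMap.proj ω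
  have hfn : ∀ d x, fn d x = ∑ ω, (d ω : ℚ) * x ω := by
    intro d x; simp [fn]
  let I := {p : Finset Ω × Finset Ω // R p.1 p.2}
  let v : Ω ⊕ I → (Ω → ℤ) := Sum.elim (fun ω => Pi.single ω 1) (fun p ω => pdiff ω p.1)
  rcases farkas_aux (Finset.univ : Finset (Ω ⊕ I)) (fun i => fn (v i)) (fn (-c)) with
    ⟨l, hl, hb⟩ | ⟨x, hx, hbx⟩
  · have h1 : ∀ ω, -(c ω : ℚ) = l (Sum.inl ω) + ∑ p : I, l (Sum.inr p) * pdiff ω p.1 := by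
      intro ω
      have := congrArg (fun f => f (Pi.single ω 1)) hb
      simpa [hfn, v, Pi.single_apply, Finset.sum_add_distrib, mul_ite, apply_ite] using this
    let D : ℕ := ∏ p : I, (l (Sum.inr p)).den
    have hD : 0 < D := Finset.prod_pos fun p _ => (l (Sum.inr p)).den_pos
    have hm : ∀ p : I, ∃ m : ℕ, (m : ℚ) = D * l (Sum.inr p) := by
      intro p
      obtain ⟨k, hk⟩ : (l (Sum.inr p)).den ∣ D :=
        Finset.dvd_prod_of_mem (fun p : I => (l (Sum.inr p)).den) (Finset.mem_univ p)
      refine ⟨k * (l (Sum.inr p)).num.toNat, ?_⟩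
      have h0 : ((l (Sum.inr p)).num.toNat : ℤ) = (l (Sum.inr p)).num :=
        Int.toNat_of_nonneg (Rat.num_nonneg.2 (hl _))
      have h0' : ((l (Sum.inr p)).num.toNat : ℚ) = ((l (Sum.inr p)).num : ℚ) := by
        exact_mod_cast h0
      rw [hk]
      push_cast
      rw [h0', ← Rat.den_mul_eq_num]
      ring
    choose m hm using hm
    refine ⟨D, ∑ p : I, m p • {p.1}, hD, ?_, ?_⟩
    · intro p hp
      rw [Multiset.mem_sum] at hp
      obtain ⟨q, -, hq⟩ := hp
      have := Multiset.mem_of_mem_nsmul hq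
      rw [Multiset.mem_singleton] at this
      rw [this]; exact q.2
    · intro ω
      have h2 : ((∑ p : I, m p • ({p.1} : Multiset (Finset Ω × Finset Ω))).map (pdiff ω)).sum
          = ∑ p : I, (m p : ℤ) * pdiff ω p.1 := by
        have := map_sum (Multiset.sumAddMonoidHom.comp (Multiset.mapAddMonoidHom (pdiff ω)))
          (fun p : I => m p • ({p.1} : Multiset (Finset Ω × Finset Ω))) Finset.univ
        refine Eq.trans this (Finset.sum_congr rfl fun p _ => ?_)
        simp [map_nsmul]
      rw [h2]
      have h3 : (D : ℚ) * c ω + ∑ p : I, (m p : ℚ) * pdiff ω p.1 = - (D * l (Sum.inl ω)) := by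
        have : ∑ p : I, (m p : ℚ) * pdiff ω p.1 = D * ∑ p : I, l (Sum.inr p) * pdiff ω p.1 := by
          rw [Finset.mul_sum]
          refine Finset.sum_congr rfl fun p _ => ?_
          rw [hm]; ring
        rw [this]
        linear_combination (-(D : ℚ)) * h1 ω
      have h4 : (0 : ℚ) ≤ D * l (Sum.inl ω) := mul_nonneg (by positivity) (hl _)
      have h5 : (D : ℚ) * c ω + ∑ p : I, (m p : ℚ) * pdiff ω p.1 ≤ 0 := by linarith
      exact_mod_cast h5
  · exfalso
    apply hno
    refine ⟨x, fun ω => ?_, fun A B h => ?_, ?_⟩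
    · have := hx (Sum.inl ω) (Finset.mem_univ _)
      simpa [hfn, v, Pi.single_apply] using this
    · have := hx (Sum.inr ⟨(A, B), h⟩) (Finset.mem_univ _)
      simp only [hfn, v, Sum.elim_inr, sum_pdiff] at this
      linarith
    · simpa [hfn] using hbx

/-- Turn a nonempty multiset of pairs into sequences. -/
theorem seq_aux {Ω : Type*} (p : Finset Ω × Finset Ω) (S : Multiset (Finset Ω × Finset Ω)) :
    ∃ (n : ℕ) (A B : Fin (n + 1) → Finset Ω), A (Fin.last n) = p.1 ∧ B (Fin.last n) = p.2 ∧
      (∀ i : Fin n, (A i.castSucc, B i.castSucc) ∈ S) ∧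
      ∀ ω, (Nat.card {i // ω ∈ B i} : ℤ) - Nat.card {i // ω ∈ A i} =
        pdiff ω p + (S.map (pdiff ω)).sum := by
  classical
  induction S using Quotient.inductionOn with
  | h L =>
  refine ⟨L.length, Fin.snoc (fun i => (L.get i).1) p.1, Fin.snoc (fun i => (L.get i).2) p.2,
    by simp, by simp, fun i => by simp, fun ω => ?_⟩
  have hc : ∀ (A : Fin (L.length + 1) → Finset Ω),
      (Nat.card {i // ω ∈ A i} : ℤ) = ∑ i, if ω ∈ A i then 1 else 0 := by
    intro A
    simp [Nat.card_eq_fintype_card, Fintype.card_subtype]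
  rw [hc, hc, Fin.sum_univ_castSucc, Fin.sum_univ_castSucc]
  simp only [Fin.snoc_castSucc, Fin.snoc_last]
  have : ((Multiset.map (pdiff ω) (Quotient.mk _ L)).sum : ℤ) = ∑ i, pdiff ω (L.get i) := by
    simp [Fin.sum_univ_fun_getElem]
  rw [this]
  simp only [pdiff, Finset.sum_sub_distrib]
  ring

theorem sum_mea_aux {Ω : Type*} [Fintype Ω] (w : Ω → ℝ) {n : ℕ} (A : Fin n → Finset Ω) :
    ∑ i, mea w (A i) = ∑ ω, (Nat.card {i // ω ∈ A i} : ℝ) * w ω := by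
  classical
  have : ∀ i, mea w (A i) = ∑ ω, if ω ∈ A i then w ω else 0 := by
    intro i; simp [mea]
  simp_rw [this]
  rw [Finset.sum_comm]
  refine Finset.sum_congr rfl fun ω _ => ?_
  rw [← Finset.sum_filter, Finset.sum_const, Nat.card_eq_fintype_card, Fintype.card_subtype,
    nsmul_eq_mul]

theorem normalize_aux {Ω : Type*} [Fintype Ω] (w : Ω → ℚ) (h0 : ∀ ω, 0 ≤ w ω)
    (hpos : 0 < ∑ ω, w ω) : ∃ u : Ω → ℝ, IsProbWeight u ∧
      (∀ A B, ∑ ω ∈ A, w ω ≤ ∑ ω ∈ B, w ω → mea u A ≤ mea u B) ∧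
      (∀ A B, ∑ ω ∈ A, w ω < ∑ ω ∈ B, w ω → mea u A < mea u B) := by
  have hp : (0 : ℝ) < ∑ ω, (w ω : ℝ) := by exact_mod_cast hpos
  have hm : ∀ A, mea (fun ω => (w ω : ℝ) / ∑ ω, (w ω : ℝ)) A
      = ((∑ ω ∈ A, w ω : ℚ) : ℝ) / ∑ ω, (w ω : ℝ) := by
    intro A; simp [mea, Finset.sum_div]
  refine ⟨fun ω => (w ω : ℝ) / ∑ ω, (w ω : ℝ), ⟨fun ω => ?_, ?_⟩, fun A B h => ?_, fun A B h => ?_⟩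
  · exact div_nonneg (by exact_mod_cast h0 ω) hp.le
  · rw [← Finset.sum_div, div_self hp.ne']
  · rw [hm, hm]
    exact div_le_div_of_nonneg_right (by exact_mod_cast h) hp.le
  · rw [hm, hm]
    exact div_lt_div_of_pos_right (by exact_mod_cast h) hp

/-- Strong representation: `≤` is strongly representable iff either it is
symmetric and satisfies (AR), or it is not symmetric and satisfies (S+), where `A < B` is
defined as `A ≤ B ∧ ¬ B ≤ A`. -/
theorem stmt4 [Fintype Ω] [Nonempty Ω] (le : Finset Ω → Finset Ω → Prop) :
    (∃ w : Ω → ℝ, IsProbWeight w ∧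
        (∀ A B : Finset Ω, le A B → mea w A ≤ mea w B) ∧
        (∀ A B : Finset Ω, (le A B ∧ ¬ le B A) → mea w A < mea w B)) ↔
      (((∀ A B : Finset Ω, le A B → le B A) ∧
          (∀ n : ℕ, ∀ A B : Fin (n + 1) → Finset Ω,
            (∀ ω : Ω, Nat.card {i // ω ∈ A i} < Nat.card {i // ω ∈ B i}) →
            (∀ i : Fin n, le (B i.castSucc) (A i.castSucc)) →
            ¬ le (B (Fin.last n)) (A (Fin.last n)))) ∨
        ((¬ ∀ A B : Finset Ω, le A B → le B A) ∧
          (∀ n : ℕ, ∀ A B : Fin (n + 1) → Finset Ω, DomSeq A B →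
            (∀ i : Fin n, le (B i.castSucc) (A i.castSucc)) →
            ¬ (le (B (Fin.last n)) (A (Fin.last n)) ∧
                ¬ le (A (Fin.last n)) (B (Fin.last n)))))) := by
  classical
  constructor
  · rintro ⟨w, ⟨hw0, hw1⟩, hle, hlt⟩
    by_cases hs : ∀ A B : Finset Ω, le A B → le B A
    · refine Or.inl ⟨hs, fun n A B hAB hi hl => ?_⟩
      have h1 : ∑ i, mea w (B i) ≤ ∑ i, mea w (A i) := by
        refine Finset.sum_le_sum fun i _ => ?_
        induction i using Fin.lastCases with
        | last => exact hle _ _ hl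
        | cast i => exact hle _ _ (hi i)
      rw [sum_mea_aux, sum_mea_aux] at h1
      have h2 : ∑ ω, ((Nat.card {i // ω ∈ A i} : ℝ) + 1) * w ω
          ≤ ∑ ω, (Nat.card {i // ω ∈ B i} : ℝ) * w ω := by
        refine Finset.sum_le_sum fun ω _ => mul_le_mul_of_nonneg_right ?_ (hw0 ω)
        exact_mod_cast hAB ω
      simp only [add_mul, one_mul, Finset.sum_add_distrib] at h2
      linarith
    · refine Or.inr ⟨hs, fun n A B hAB hi hl => ?_⟩
      have h1 : ∑ i, mea w (B i) < ∑ i, mea w (A i) := by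
        rw [Fin.sum_univ_castSucc, Fin.sum_univ_castSucc]
        exact add_lt_add_of_le_of_lt (Finset.sum_le_sum fun i _ => hle _ _ (hi i)) (hlt _ _ hl)
      rw [sum_mea_aux, sum_mea_aux] at h1
      have h2 : ∑ ω, (Nat.card {i // ω ∈ A i} : ℝ) * w ω
          ≤ ∑ ω, (Nat.card {i // ω ∈ B i} : ℝ) * w ω := by
        refine Finset.sum_le_sum fun ω _ => mul_le_mul_of_nonneg_right ?_ (hw0 ω)
        exact_mod_cast hAB ω
      linarith
  · rintro (⟨hs, hAR⟩ | ⟨hs, hS⟩)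
    · have hex : ∃ w : Ω → ℚ, (∀ ω, 0 ≤ w ω) ∧
          (∀ A B, le A B → ∑ ω ∈ A, w ω ≤ ∑ ω ∈ B, w ω) ∧
          0 < ∑ ω, (((fun _ => 1 : Ω → ℤ) ω : ℤ) : ℚ) * w ω := by
        by_contra hno
        obtain ⟨D, S, hD, hSR, hsum⟩ := key_aux le (fun _ => 1) hno
        have hDZ : (0 : ℤ) < D := by exact_mod_cast hD
        have hne : S ≠ 0 := by
          rintro rfl
          obtain ⟨ω⟩ := ‹Nonempty Ω›
          have := hsum ω
          simp at this
          omega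
        obtain ⟨p, hp⟩ := Multiset.exists_mem_of_ne_zero hne
        obtain ⟨T, rfl⟩ := Multiset.exists_cons_of_mem hp
        obtain ⟨n, A, B, hA, hB, hmem, hcard⟩ := seq_aux p T
        refine hAR n B A (fun ω => ?_) (fun i => ?_) ?_
        · have h1 := hsum ω
          have h2 := hcard ω
          rw [Multiset.map_cons, Multiset.sum_cons] at h1
          omega
        · exact hSR _ (Multiset.mem_cons_of_mem (hmem i))
        · rw [hA, hB]; exact hSR p hp
      obtain ⟨w, hw0, hwle, hwpos⟩ := hex
      obtain ⟨u, hu, hu1, -⟩ := normalize_aux w hw0 (by simpa using hwpos)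
      exact ⟨u, hu, fun A B h => hu1 _ _ (hwle _ _ h), fun A B h => absurd (hs _ _ h.1) h.2⟩
    · have hex : ∀ p : Finset Ω × Finset Ω, ∃ w : Ω → ℚ, (∀ ω, 0 ≤ w ω) ∧
          (∀ A B, le A B → ∑ ω ∈ A, w ω ≤ ∑ ω ∈ B, w ω) ∧
          (le p.1 p.2 ∧ ¬ le p.2 p.1 → ∑ ω ∈ p.1, w ω < ∑ ω ∈ p.2, w ω) := by
        intro p
        by_cases hp : le p.1 p.2 ∧ ¬ le p.2 p.1
        swap
        · exact ⟨0, by simp, by simp, fun h => absurd h hp⟩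
        by_contra hno
        obtain ⟨D, S, hD, hSR, hsum⟩ := key_aux le (fun ω => pdiff ω p) (by
          rintro ⟨w, h0, h1, h2⟩
          refine hno ⟨w, h0, h1, fun _ => ?_⟩
          rw [sum_pdiff] at h2
          linarith)
        obtain ⟨k, rfl⟩ : ∃ k, D = k + 1 := ⟨D - 1, by omega⟩
        obtain ⟨n, A, B, hA, hB, hmem, hcard⟩ := seq_aux p (S + k • {p})
        refine hS n B A (fun ω => ?_) (fun i => ?_) ?_
        · have h1 := hsum ω
          have h2 := hcard ω
          simp only [Multiset.map_add, Multiset.map_nsmul, Multiset.map_singleton,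
            Multiset.sum_add, Multiset.sum_nsmul, Multiset.sum_singleton, nsmul_eq_mul] at h2
          push_cast at h1
          have h3 : (Nat.card {i // ω ∈ B i} : ℤ) ≤ Nat.card {i // ω ∈ A i} := by linarith
          exact_mod_cast h3
        · rcases Multiset.mem_add.1 (hmem i) with h | h
          · exact hSR _ h
          · have := Multiset.mem_of_mem_nsmul h
            rw [Multiset.mem_singleton] at this
            rw [← this] at hp
            exact hp.1
        · rw [hA, hB]; exact hp
      choose W hW0 hWle hWlt using hex
      have hsw : ∀ A : Finset Ω, ∑ ω ∈ A, (∑ p, W p ω) = ∑ p, ∑ ω ∈ A, W p ω :=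
        fun A => Finset.sum_comm
      have hlt : ∀ A B, le A B ∧ ¬ le B A →
          ∑ ω ∈ A, (∑ p, W p ω) < ∑ ω ∈ B, (∑ p, W p ω) := by
        intro A B h
        rw [hsw, hsw]
        exact Finset.sum_lt_sum (fun p _ => hWle p _ _ h.1)
          ⟨(A, B), Finset.mem_univ _, hWlt (A, B) h⟩
      have h0 : ∀ ω, 0 ≤ ∑ p, W p ω := fun ω => Finset.sum_nonneg fun p _ => hW0 p ω
      push Not at hs
      obtain ⟨A0, B0, hs1, hs2⟩ := hs
      obtain ⟨u, hu, hu1, hu2⟩ := normalize_aux (fun ω => ∑ p, W p ω) h0 (by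
        calc 0 ≤ ∑ ω ∈ A0, (∑ p, W p ω) := Finset.sum_nonneg fun ω _ => h0 ω
          _ < ∑ ω ∈ B0, (∑ p, W p ω) := hlt _ _ ⟨hs1, hs2⟩
          _ ≤ _ := Finset.sum_le_sum_of_subset_of_nonneg (Finset.subset_univ _)
            fun ω _ _ => h0 ω)
      refine ⟨u, hu, fun A B h => hu1 _ _ ?_, fun A B h => hu2 _ _ (hlt A B h)⟩
      rw [hsw, hsw]
      exact Finset.sum_le_sum fun p _ => hWle p _ _ h
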